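/- Let m be a positive integer, n ≥ 2 an integer, and l : Fin n → ℤ a family of integers each coprime to m, and let ℤ/m act on S^{2n−1} coordinatewise by (a • z)_i = exp(2πi·l_i·a/m)·z_i. Then the fundamental group of the lens space L(l_1,…,l_n) (at any basepoint) is isomorphic to the cyclic group ℤ/m. -/

import Mathlib

/-!
`S^{2n-1}` is simply connected for `n ≥ 2`, and the rotations by powers of a primitive `m`-th root
of unity act freely on it, so the projection onto the lens space is the universal covering and its
deck group `ℤ/m` is the fundamental group.

A path in a sphere of dimension at least two is homotopic to one which misses a point: replace it
by a nearby Bernstein polynomial curve, pushed back radially to the sphere. The cone over a smooth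
curve is the image of a smooth map from `ℝ²`, so by Sard's theorem it misses some direction. A loop
in the complement of a point is null-homotopic, by stereographic projection.
-/

open Metric Module NormedSpace unitInterval
open scoped ContDiff

section Sphere

section NormedSpace

variable {E : Type*} [NormedAddCommGroup E] [NormedSpace ℝ E]

theorem exists_contDiff_dist_lt_eq_endpoints (f : C(I, E)) {ε : ℝ} (hε : 0 < ε) :
    ∃ g : ℝ → E, ContDiff ℝ ω g ∧ g 0 = f 0 ∧ g 1 = f 1 ∧ ∀ t : I, dist (g t) (f t) < ε := by
  obtain ⟨n, hn, hn0⟩ := ((tendsto_nhds.mp (bernsteinApproximation_uniform f) ε hε).and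
    (Filter.eventually_ne_atTop 0)).exists
  let g (x : ℝ) : E := ∑ k : Fin (n + 1),
    ((n.choose k : ℝ) * x ^ (k : ℕ) * (1 - x) ^ (n - (k : ℕ))) • f (bernstein.z k)
  have hg (t : I) : g t = bernsteinApproximation n f t := by
    simp only [g, bernsteinApproximation.apply, bernstein_apply]
  refine ⟨g, by fun_prop, ?_, ?_, fun t ↦ ?_⟩
  · simpa using hg 0
  · simpa [hn0] using hg 1
  · exact hg t ▸ (ContinuousMap.dist_apply_le_dist t).trans_lt hn

theorem exists_sphere_forall_normalize_ne {F : Type*} [NormedAddCommGroup F] [NormedSpace ℝ F]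
    [FiniteDimensional ℝ F] {g : F → E} (hg : ContDiff ℝ 1 g)
    (hFE : finrank ℝ F + 1 < finrank ℝ E) :
    ∃ v : sphere (0 : E) 1, ∀ x, normalize (g x) ≠ v := by
  have : FiniteDimensional ℝ E := .of_finrank_pos (by omega)
  have hdense : Dense (Set.range fun p : ℝ × F ↦ p.1 • g p.2)ᶜ :=
    ContDiff.dense_compl_range_of_finrank_lt_finrank (by fun_prop)
      (by simpa [add_comm] using hFE)
  obtain ⟨w, hw⟩ := hdense.nonempty
  have hw0 : w ≠ 0 := by
    rintro rfl
    exact hw ⟨(0, 0), zero_smul ℝ _⟩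
  refine ⟨⟨normalize w, by simp [hw0]⟩, fun x hx ↦ hw ⟨(‖w‖ * ‖g x‖⁻¹, x), ?_⟩⟩
  calc (‖w‖ * ‖g x‖⁻¹) • g x = ‖w‖ • normalize (g x) := mul_smul ..
    _ = w := by rw [hx, norm_smul_normalize]

/-- The radial projection to the unit sphere of a continuous map without zeros. -/
noncomputable def radialProj {X : Type*} [TopologicalSpace X] (f : C(X, E)) (hf : ∀ x, f x ≠ 0) :
    C(X, sphere (0 : E) 1) where
  toFun x := ⟨normalize (f x), mem_sphere_zero_iff_norm.mpr (norm_normalize (hf x))⟩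
  continuous_toFun := by
    refine .subtype_mk (.smul (.inv₀ (by fun_prop) fun x ↦ norm_ne_zero_iff.mpr (hf x)) ?_) _
    fun_prop

theorem radialProj_apply_eq {X : Type*} [TopologicalSpace X] {f : C(X, E)} (hf : ∀ x, f x ≠ 0)
    {x : X} {v : sphere (0 : E) 1} (hx : f x = v) : radialProj f hf x = v :=
  Subtype.ext <| by
    rw [← normalize_eq_self_of_norm_eq_one (norm_eq_of_mem_sphere v), ← hx]
    rfl

theorem zero_notMem_segment_of_norm_eq {a b : E} (h : ‖a‖ = ‖b‖) (hab : a ≠ -b) :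
    (0 : E) ∉ segment ℝ a b := by
  rw [mem_segment_iff_sameRay, zero_sub, sub_zero, sameRay_iff_of_norm_eq (by rwa [norm_neg])]
  exact fun h0 ↦ hab (neg_eq_iff_eq_neg.mp h0)

theorem homotopic_of_forall_ne_neg {x y : sphere (0 : E) 1} (γ₀ γ₁ : Path x y)
    (h : ∀ t, γ₀ t ≠ -γ₁ t) : γ₀.Homotopic γ₁ := by
  let ι : C(sphere (0 : E) 1, E) := ⟨Subtype.val, continuous_subtype_val⟩
  let A := ContinuousMap.Homotopy.affine (ι.comp γ₀.toContinuousMap) (ι.comp γ₁.toContinuousMap)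
  have hA (p : I × I) : A p ≠ 0 := by
    refine ne_of_mem_of_not_mem (lineMap_mem_segment ℝ _ _ p.1.2) ?_
    exact zero_notMem_segment_of_norm_eq (by simp [ι]) fun heq ↦ h p.2 (Subtype.ext heq)
  have hA_endpoint (s t : I) (h₀₁ : γ₀ t = γ₁ t) : A (s, t) = γ₀ t := by
    simp [A, ι, h₀₁]
  refine ⟨⟨⟨radialProj A.toContinuousMap hA, fun t ↦ ?_, fun t ↦ ?_⟩, ?_⟩⟩
  · exact radialProj_apply_eq hA (A.apply_zero t)
  · exact radialProj_apply_eq hA (A.apply_one t)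
  · rintro s t (rfl | rfl)
    · exact radialProj_apply_eq hA (hA_endpoint s 0 (by simp))
    · exact radialProj_apply_eq hA (hA_endpoint s 1 (by simp))

theorem normalize_ne_neg_of_dist_lt_one {a b : E} (hb : ‖b‖ = 1) (h : dist a b < 1) :
    normalize a ≠ -b := by
  intro hab
  have ha : a - b = -((‖a‖ + 1) • b) := by
    nth_rw 1 [← norm_smul_normalize a]
    rw [hab]
    module
  have : dist a b = ‖a‖ + 1 := by
    rw [dist_eq_norm, ha, norm_neg, norm_smul, hb, mul_one, Real.norm_of_nonneg (by positivity)]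
  linarith [norm_nonneg a]

theorem exists_homotopic_forall_ne (hE : 2 < finrank ℝ E) {x y : sphere (0 : E) 1}
    (γ : Path x y) :
    ∃ γ' : Path x y, γ.Homotopic γ' ∧ ∃ v, ∀ t, γ' t ≠ v := by
  obtain ⟨g, hg, hg0, hg1, hgγ⟩ :=
    exists_contDiff_dist_lt_eq_endpoints ⟨fun t ↦ (γ t : E), by fun_prop⟩ one_pos
  obtain ⟨v, hv⟩ := exists_sphere_forall_normalize_ne (hg.of_le le_top) (by simpa using hE)
  let gI : C(I, E) := ⟨fun t ↦ g t, hg.continuous.comp continuous_subtype_val⟩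
  have hgI (t : I) : gI t ≠ 0 := by
    intro (h0 : g t = 0)
    simpa [h0] using hgγ t
  let γ' : Path x y :=
    { toContinuousMap := radialProj gI hgI
      source' := radialProj_apply_eq hgI (by simpa [gI] using hg0)
      target' := radialProj_apply_eq hgI (by simpa [gI] using hg1) }
  refine ⟨γ', homotopic_of_forall_ne_neg γ γ' fun t h ↦ ?_, v, fun t h ↦ hv t congr(($h : E))⟩
  exact normalize_ne_neg_of_dist_lt_one (norm_eq_of_mem_sphere (γ t)) (hgγ t)
    (neg_eq_iff_eq_neg.mp congr(($h : E)).symm)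

end NormedSpace

theorem isSimplyConnected_sphere_compl_singleton {E : Type*} [NormedAddCommGroup E]
    [InnerProductSpace ℝ E] (v : sphere (0 : E) 1) :
    IsSimplyConnected ({v}ᶜ : Set (sphere (0 : E) 1)) :=
  let e := (stereographic (norm_eq_of_mem_sphere v)).toHomeomorphSourceTarget
  (e.trans (Homeomorph.Set.univ _)).toHomotopyEquiv.simplyConnectedSpace

theorem simplyConnectedSpace_sphere {E : Type*} [NormedAddCommGroup E] [InnerProductSpace ℝ E]
    (hE : 2 < finrank ℝ E) : SimplyConnectedSpace (sphere (0 : E) 1) := by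
  rw [simply_connected_iff_loops_nullhomotopic, ← isPathConnected_iff_pathConnectedSpace]
  refine ⟨isPathConnected_sphere ?_ 0 zero_le_one, fun x γ ↦ ?_⟩
  · exact_mod_cast lt_rank_of_lt_finrank (one_lt_two.trans hE)
  obtain ⟨γ', hγ, v, hv⟩ := exists_homotopic_forall_ne hE γ
  obtain ⟨F, -⟩ := (isSimplyConnected_iff_exists_homotopy_refl_forall_mem.mp
    (isSimplyConnected_sphere_compl_singleton v)).2 x γ' hv
  exact hγ.trans ⟨F⟩

theorem simplyConnectedSpace_sphere_complex {E : Type*} [NormedAddCommGroup E]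
    [InnerProductSpace ℂ E] (hE : 1 < finrank ℂ E) : SimplyConnectedSpace (sphere (0 : E) 1) :=
  letI : InnerProductSpace ℝ E := .complexToReal
  simplyConnectedSpace_sphere (by rw [finrank_real_of_complex]; omega)

end Sphere

theorem nonempty_fundamentalGroup_orbitRel_quotient_mulEquiv (G : Type*) {X : Type*} [Group G]
    [TopologicalSpace X] [MulAction G X] [ContinuousConstSMul G X] [ProperlyDiscontinuousSMul G X]
    [IsCancelSMul G X] [LocallyCompactSpace X] [T2Space X] [SimplyConnectedSpace X]
    (p : MulAction.orbitRel.Quotient G X) :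
    Nonempty (FundamentalGroup (MulAction.orbitRel.Quotient G X) p ≃* Gᵐᵒᵖ) := by
  obtain ⟨x, rfl⟩ := Quotient.mk_surjective p
  exact ⟨(isQuotientCoveringMap_quotientMk_of_properlyDiscontinuousSMul (G := G)
    ).fundamentalGroupEquiv ⟨x, rfl⟩⟩

section LensHom

variable {ι : Type*}

/-- The homomorphism `ℤ/m → (S¹)^ι`, `a ↦ (exp (2πi·lᵢ·a/m))ᵢ`. -/
noncomputable def lensHom (m : ℕ) [NeZero m] (l : ι → ℤ) :
    Multiplicative (ZMod m) →* (ι → Circle) :=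
  MonoidHom.pi fun i ↦ (ZMod.toCircle.mulShift (l i : ZMod m)).toMonoidHom

variable {m : ℕ} [NeZero m] {l : ι → ℤ}

theorem coe_lensHom_apply (a : ZMod m) (i : ι) :
    (lensHom m l (.ofAdd a) i : ℂ) =
      Complex.exp (2 * Real.pi * Complex.I * l i * a.val / m) := by
  have : (lensHom m l (.ofAdd a) i : ℂ) = ZMod.toCircle ((l i * a.val : ℤ) : ZMod m) := by
    simp [lensHom]
  rw [this, ZMod.toCircle_intCast]
  push_cast
  ring_nf

theorem lensHom_apply_eq_one_iff {i : ι} (hl : Int.gcd (l i) m = 1)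
    {a : Multiplicative (ZMod m)} : lensHom m l a i = 1 ↔ a = 1 := by
  have hu : IsUnit (l i : ZMod m) :=
    (ZMod.coe_int_isUnit_iff_isCoprime _ _).mpr (Int.isCoprime_iff_gcd_eq_one.mpr hl).symm
  have : lensHom m l a i = ZMod.toCircle ((l i : ZMod m) * a.toAdd) := rfl
  rw [this, ← toAdd_eq_zero, ← hu.mul_right_eq_zero, ← ZMod.injective_toCircle.eq_iff,
    AddChar.map_zero_eq_one]

theorem lensHom_injective {i : ι} (hl : Int.gcd (l i) m = 1) :
    Function.Injective (lensHom m l) :=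
  (injective_iff_map_eq_one _).mpr fun _ ha ↦ (lensHom_apply_eq_one_iff hl).mp (congr_fun ha i)

end LensHom

section LensSpace

variable {ι : Type*} [Fintype ι]

/-- The torus `(S¹)^ι` acts on the unit sphere of `ℂ^ι` by rotating the coordinates. -/
noncomputable instance torusActionSphere :
    MulAction (ι → Circle) (sphere (0 : EuclideanSpace ℂ ι) 1) where
  smul u z := ⟨u • (z : EuclideanSpace ℂ ι), by
    have hz : ‖(z : EuclideanSpace ℂ ι)‖ = 1 := norm_eq_of_mem_sphere z
    rw [EuclideanSpace.norm_eq] at hz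
    simpa [EuclideanSpace.norm_eq, Circle.smul_def, Circle.norm_coe] using hz⟩
  one_smul z := Subtype.ext (one_smul _ _)
  mul_smul u v z := Subtype.ext (mul_smul u v _)

theorem torus_smul_apply (u : ι → Circle) (z : sphere (0 : EuclideanSpace ℂ ι) 1) (i : ι) :
    (u • z : sphere (0 : EuclideanSpace ℂ ι) 1).1 i = u i * z.1 i :=
  rfl

instance continuousSMul_torus_sphere :
    ContinuousSMul (ι → Circle) (sphere (0 : EuclideanSpace ℂ ι) 1) where
  continuous_smul := by
    refine Continuous.subtype_mk (f := fun p : (ι → Circle) × sphere (0 : EuclideanSpace ℂ ι) 1 ↦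
      WithLp.toLp 2 fun i ↦ (p.1 i : ℂ) * p.2.1 i) ?_ _
    fun_prop

theorem isCancelSMul_torus_subgroup {T : Subgroup (ι → Circle)}
    (hT : ∀ u ∈ T, ∀ i, u i = 1 → u = 1) :
    IsCancelSMul T (sphere (0 : EuclideanSpace ℂ ι) 1) := by
  refine isCancelSMul_iff_eq_one_of_smul_eq.mpr fun ⟨u, hu⟩ z huz ↦ Subtype.ext ?_
  obtain ⟨i, hi⟩ : ∃ i, z.1 i ≠ 0 := by
    by_contra! hz
    exact ne_zero_of_mem_unit_sphere z (PiLp.ext hz)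
  have hui : (u i : ℂ) * z.1 i = z.1 i := by
    rw [← torus_smul_apply, ← Subgroup.mk_smul u hu, huz]
  exact hT u hu i (Circle.ext (by simpa [hi] using hui))

variable {m : ℕ} [NeZero m] {l : ι → ℤ}

theorem isCancelSMul_lensHom_range (hl : ∀ i, Int.gcd (l i) m = 1) :
    IsCancelSMul (lensHom m l).range (sphere (0 : EuclideanSpace ℂ ι) 1) := by
  refine isCancelSMul_torus_subgroup ?_
  rintro _ ⟨a, rfl⟩ i hai
  rw [(lensHom_apply_eq_one_iff (hl i)).mp hai, map_one]

theorem orbitRel_lensHom_range_iff {z w : sphere (0 : EuclideanSpace ℂ ι) 1} :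
    MulAction.orbitRel (lensHom m l).range _ z w ↔ ∃ a : ZMod m, ∀ i,
      Complex.exp (2 * Real.pi * Complex.I * l i * a.val / m) * z.1 i = w.1 i := by
  rw [Setoid.comm', MulAction.orbitRel_apply]
  constructor
  · rintro ⟨⟨_, a, rfl⟩, rfl⟩
    refine ⟨a.toAdd, fun i ↦ ?_⟩
    rw [← coe_lensHom_apply, ofAdd_toAdd]
    rfl
  · rintro ⟨a, ha⟩
    refine ⟨⟨lensHom m l (.ofAdd a), _, rfl⟩, Subtype.ext (PiLp.ext fun i ↦ ?_)⟩
    rw [← ha, ← coe_lensHom_apply]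
    rfl

end LensSpace

/-- Let `m ≥ 1`, `n ≥ 2`, and let `ℤ/m` act on the unit sphere `S^{2n-1} ⊆ ℂⁿ` coordinatewise
by `(a • z) i = exp(2πi·lᵢ·a/m) · z i`, where the integers `lᵢ` are coprime to `m`.  The
fundamental group of the lens space `L(l₁,…,lₙ)` (the orbit space with the quotient topology),
at any basepoint, is isomorphic to the cyclic group `ℤ/m`. -/
theorem lens_space_fundamental_group (m n : ℕ) (hm : 0 < m) (hn : 2 ≤ n)
    (l : Fin n → ℤ) (hl : ∀ i, Int.gcd (l i) m = 1)
    (r : Metric.sphere (0 : EuclideanSpace ℂ (Fin n)) 1 →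
      Metric.sphere (0 : EuclideanSpace ℂ (Fin n)) 1 → Prop)
    (hr : ∀ z w : Metric.sphere (0 : EuclideanSpace ℂ (Fin n)) 1,
      r z w ↔ ∃ a : ZMod m, ∀ i : Fin n,
        Complex.exp (2 * (Real.pi : ℂ) * Complex.I * (l i : ℂ) * (a.val : ℂ) / (m : ℂ))
            * (z : EuclideanSpace ℂ (Fin n)) i
          = (w : EuclideanSpace ℂ (Fin n)) i)
    (p : Quot r) :
    Nonempty (FundamentalGroup (Quot r) p ≃* Multiplicative (ZMod m)) := by
  have : NeZero m := ⟨hm.ne'⟩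
  have : SimplyConnectedSpace (sphere (0 : EuclideanSpace ℂ (Fin n)) 1) :=
    simplyConnectedSpace_sphere_complex (by rw [finrank_euclideanSpace_fin]; omega)
  have : Finite (lensHom m l).range := .of_surjective _ (lensHom m l).rangeRestrict_surjective
  have := isCancelSMul_lensHom_range hl
  obtain rfl : r = MulAction.orbitRel (lensHom m l).range _ := by
    ext z w
    rw [hr, orbitRel_lensHom_range_iff]
  obtain ⟨e⟩ := nonempty_fundamentalGroup_orbitRel_quotient_mulEquiv (lensHom m l).range p
  exact ⟨e.trans <| MulOpposite.opMulEquiv.symm.trans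
    (MonoidHom.ofInjective (lensHom_injective (hl ⟨0, by omega⟩))).symm⟩
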